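/- Assume I is m-primary and let p ≥ 2 be an integer. (i) For every μ ≥ 0 and every α ∈ J⟨p⟩ homogeneous of X-degree μ, one has Δα ∈ J⟨p−1⟩ (so Δ induces an R'-linear map λ_p^μ : (J⟨p⟩/J⟨p−1⟩)_μ → (J⟨p−1⟩/(J⟨p−2⟩+KS))_{μ+d}). (ii) For every μ ≥ μ₀(I), λ_p^μ is an isomorphism: if α ∈ J⟨p⟩ is homogeneous of X-degree μ and Δα ∈ J⟨p−2⟩ + KS, then α ∈ J⟨p−1⟩; and for every β ∈ J⟨p−1⟩ homogeneous of X-degree μ+d there exists α ∈ J⟨p⟩ homogeneous of X-degree μ with Δα − β ∈ J⟨p−2⟩ + KS. -/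

import Mathlib

/-!
Write `R = k[X_1, …, X_n]`, `S = R[T_0, …, T_n]`, `I = (f_0, …, f_n)`.

*Algebra of `Δ`.* Modulo `KS`, the map `Δ` sends `∑ T_i P_i` to `∑ f_i P_i`; hence it is `S`-linear
modulo `KS` on polynomials without term of `T`-degree `0` (`down_mul`), it satisfies
`f_i P ≡ T_i Δ(P)` (`C_mul_sub_X_mul_down`), and it maps `J⟨1⟩` to `KS` (`down_J1`). Elements of `J`
have no term of `T`-degree `0`, so `Δ` preserves `J` and lowers the `T`-degree; this is (i)
(`down_Jl`). Conversely `Δ P ∈ KS` forces `P ∈ J⟨1⟩` (`mem_J1_of_down_mem_KS`).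

*The threshold.* If `μ ≥ μ₀(I)` then `R_{μ+d} ⊆ I` (`mem_of_threshold`). Suppose that `g ∉ I` is
homogeneous of degree `s`, and choose `N` with all `X_j^N ∈ I`. A linear form on `R` vanishing on `I`
but not at `g` yields, through the monomial duality of `R/(X_1^N, …, X_n^N)`, a nonzero element of
degree `n(N-1) - s` of that ring annihilated by `I` (`exists_socle`), i.e. a nonzero class in the top
Koszul homology `H_{n+1}(f; A_n)`, where `A_j = R/(X_1^N, …, X_j^N)`. As `X_j^N ∈ I` annihilates
Koszul homology (homotopy `kd_kh`), `H_i(f; A_j) = 0` for `i ≥ j + 2` (`KVan_all`), so the connecting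
maps `H_{j+1}(f; A_j) → H_j(f; A_{j-1})` of `0 → A_{j-1} → A_{j-1} → A_j → 0` are injective
(`KNon_step`). Descending to `A_0 = R` produces a nonzero class of `H_1` given by a syzygy with
entries of degree `n(d-1) - s` (`exists_H1`). For `s = μ + d` this contradicts the definition of the
threshold.

*Isomorphism.* Let `μ ≥ μ₀(I)`. If `β ∈ J` has `X`-degree `μ + d`, its coefficients lie in `I`, so
`β = ∑ f_i β_i`; the element `α = ∑ T_i β_i` satisfies `Δ α ≡ β`, and `f_i α ≡ T_i β ∈ J` gives
`α ∈ J` because `J` is saturated (`exists_lift`). Since the `X`-homogeneous part of `J⟨ℓ⟩` is spanned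
over `k[T_0, …, T_n]` by `X`-homogeneous elements of `J` of `T`-degree at most `ℓ`
(`comp_Jl_mem_closure`), `Δ` maps `J⟨ℓ+1⟩_μ` onto `J⟨ℓ⟩_{μ+d}` modulo `KS` (`down_surj`). For
injectivity, if `Δ α ∈ J⟨p-2⟩ + KS`, choose `Γ ∈ J⟨p-1⟩` with `Δ Γ ≡ Δ α` modulo `KS`; then
`α - Γ ∈ J⟨1⟩`, so `α ∈ J⟨p-1⟩`.
-/

open MvPolynomial

noncomputable section

variable {k : Type*} [Field k] {n : ℕ}

/-- `R = k[X₁, …, X_n]`. -/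
abbrev Rx (k : Type*) [Field k] (n : ℕ) := MvPolynomial (Fin n) k

/-- `S = R[T₀, …, T_n]`. -/
abbrev Sx (k : Type*) [Field k] (n : ℕ) := MvPolynomial (Fin (n+1)) (Rx k n)

/-- The irrelevant maximal ideal `m = (X₁, …, X_n)` of `R`. -/
def mIdeal (k : Type*) [Field k] (n : ℕ) : Ideal (Rx k n) :=
  Ideal.span (Set.range (X : Fin n → Rx k n))

/-- The extension `m·S` of `m` to `S`. -/
def mS (k : Type*) [Field k] (n : ℕ) : Ideal (Sx k n) :=
  Ideal.span (Set.range fun i : Fin n => (C (X i : Rx k n) : Sx k n))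

/-- An element of `S` is homogeneous of `X`-degree `μ` if all of its `R`-coefficients are
homogeneous of degree `μ`. -/
def XHomog (μ : ℕ) (P : Sx k n) : Prop :=
  ∀ α : (Fin (n+1)) →₀ ℕ, (MvPolynomial.coeff α P).IsHomogeneous μ

/-- The ideal `KS ⊆ S` of Koszul relations, generated by `f_i T_j - f_j T_i`, `i < j`. -/
def KS (f : Fin (n+1) → Rx k n) : Ideal (Sx k n) :=
  Ideal.span {P | ∃ i j : Fin (n+1), i < j ∧
    P = C (f i) * X j - C (f j) * X i}

/-- The ideal `J⟨1⟩ ⊆ S` generated by the linear forms `a₀T₀ + ⋯ + a_nT_n` coming from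
syzygies `(a₀, …, a_n)` of `f`. -/
def J1 (f : Fin (n+1) → Rx k n) : Ideal (Sx k n) :=
  Ideal.span {P | ∃ a : Fin (n+1) → Rx k n,
    (∑ i, a i * f i) = 0 ∧ P = ∑ i, C (a i) * X i}

/-- `J`, the saturation of `J⟨1⟩` with respect to `m·S`, as a subset of `S`. -/
def Jset (f : Fin (n+1) → Rx k n) : Set (Sx k n) :=
  {P | ∃ N : ℕ, ∀ Q ∈ (mS k n) ^ N, Q * P ∈ J1 f}

/-- `J⟨ℓ⟩ ⊆ S`: the ideal generated by the elements of `J` of `T`-degree at most `ℓ`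
(note that `J⟨0⟩ = 0`). -/
def Jl (f : Fin (n+1) → Rx k n) (ℓ : ℕ) : Ideal (Sx k n) :=
  Ideal.span {P | P ∈ Jset f ∧ P.totalDegree ≤ ℓ}

/-- The downgrading map `Δ : S → S`, sending `c·T^α` to `c·f_{i(α)}·T^{α - e_{i(α)}}`
where `i(α)` is the least index `i` with `α_i > 0`, and `c` to `0` for `c ∈ R`. -/
def down (f : Fin (n+1) → Rx k n) (P : Sx k n) : Sx k n :=
  ∑ α ∈ P.support, dite (α = 0) (fun _ => 0) (fun h =>
    letI i := α.support.min' (Finsupp.support_nonempty_iff.mpr h)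
    monomial (α - Finsupp.single i 1) (MvPolynomial.coeff α P * f i))

/-- The (first) Koszul boundaries `B₁ ⊆ R^{n+1}`. -/
def koszulB1 (f : Fin (n+1) → Rx k n) : Submodule (Rx k n) (Fin (n+1) → Rx k n) :=
  Submodule.span (Rx k n)
    {v | ∃ i j : Fin (n+1), i < j ∧ v = Pi.single j (f i) - Pi.single i (f j)}

/-- `(H₁)_ν ≠ 0`. -/
def H1Nonzero (f : Fin (n+1) → Rx k n) (d ν : ℕ) : Prop :=
  ∃ a : Fin (n+1) → Rx k n, ∃ e : ℕ, ν = e + d ∧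
    (∀ i, (a i).IsHomogeneous e) ∧ (∑ i, a i * f i) = 0 ∧ a ∉ koszulB1 f

/-- The initial degree, as an extended natural number. -/
def indegE (s : Set ℕ) : ℕ∞ := sInf ((↑) '' s)

/-! ### The Koszul complex and its null-homotopies -/

section Koszul
variable {A ι : Type*} [CommRing A] [LinearOrder ι]

/-- The Koszul sign attached to `i` and a set `S` of indices: `(-1)^{#{j ∈ S : j < i}}`. -/
def ksign (A : Type*) [CommRing A] {ι : Type*} [LinearOrder ι] (i : ι) (S : Finset ι) : A :=
  ∏ j ∈ S, if j < i then -1 else 1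

lemma ksign_insert (i j : ι) (S : Finset ι) (h : j ∉ S) :
    ksign A i (insert j S) = (if j < i then -1 else 1) * ksign A i S := by
  simp [ksign, Finset.prod_insert h]

lemma ksign_mul_self (i : ι) (S : Finset ι) : ksign A i S * ksign A i S = 1 := by
  rw [ksign, ← Finset.prod_mul_distrib]
  apply Finset.prod_eq_one
  intro j _
  split_ifs <;> simp

variable [Fintype ι]

/-- The Koszul differential, contraction by `f`. The element `∑ x(S) e_S` of the exterior algebra
on the `e_i`, where `e_S` is the product of the `e_i`, `i ∈ S`, in increasing order, is encoded as
the function `x` on the subsets of `ι`. -/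
def kd (f : ι → A) (x : Finset ι → A) (S : Finset ι) : A :=
  ∑ i, if i ∈ S then 0 else ksign A i S * f i * x (insert i S)

/-- Left exterior multiplication by `∑ c_i e_i`, in the encoding of `kd`. -/
def kh (c : ι → A) (x : Finset ι → A) (S : Finset ι) : A :=
  ∑ i, if i ∈ S then ksign A i S * c i * x (S.erase i) else 0

/-- An alternating double sum vanishes; no division by `2` is involved. -/
lemma sum_antisymm (G : ι → ι → A) (h0 : ∀ i, G i i = 0) (h : ∀ i j, i ≠ j → G i j + G j i = 0) :
    ∑ i, ∑ j, G i j = 0 := by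
  rw [← Finset.sum_product']
  refine Finset.sum_involution (fun p _ => (p.2, p.1)) ?_ ?_ ?_ ?_
  · rintro ⟨i, j⟩ _
    by_cases hij : i = j
    · subst hij; simp [h0]
    · exact h i j hij
  · rintro ⟨i, j⟩ _ hne heq
    simp only [Prod.mk.injEq] at heq
    obtain ⟨h1, _⟩ := heq
    subst h1
    exact hne (h0 _)
  · simp
  · simp

/-- The Koszul differential squares to zero. -/
lemma kd_kd (f : ι → A) (x : Finset ι → A) : kd f (kd f x) = 0 := by
  funext S
  simp only [kd, Pi.zero_apply]
  have : ∀ i, (if i ∈ S then 0 else ksign A i S * f i * ∑ j,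
      if j ∈ insert i S then 0 else ksign A j (insert i S) * f j * x (insert j (insert i S))) =
      ∑ j, if i ∈ S ∨ j ∈ S ∨ i = j then 0 else
        ksign A i S * f i * (ksign A j (insert i S) * f j * x (insert j (insert i S))) := by
    intro i
    by_cases hi : i ∈ S
    · simp [hi]
    · rw [if_neg hi, Finset.mul_sum]
      refine Finset.sum_congr rfl fun j _ => ?_
      by_cases hj : j ∈ S
      · simp [hj]
      · by_cases hij : i = j
        · simp [hij]
        · simp [hi, hj, hij, Ne.symm hij]
  rw [Finset.sum_congr rfl fun i _ => this i]
  apply sum_antisymm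
  · simp
  · intro i j hij
    by_cases hi : i ∈ S
    · simp [hi]
    by_cases hj : j ∈ S
    · simp [hj]
    simp only [hi, hj, hij, Ne.symm hij, or_self, if_false]
    rw [ksign_insert _ _ _ hi, ksign_insert _ _ _ hj, Finset.insert_comm j i]
    rcases lt_or_gt_of_ne hij with h | h
    · rw [if_pos h, if_neg h.not_gt]; ring
    · rw [if_pos h, if_neg h.not_gt]; ring

/-- Exterior multiplication by `c` is a homotopy between `0` and multiplication by `∑ c_i f_i`;
hence the elements of the ideal generated by `f` annihilate Koszul homology. -/
lemma kd_kh (f c : ι → A) (x : Finset ι → A) :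
    kd f (kh c x) + kh c (kd f x) = (∑ i, c i * f i) • x := by
  funext S
  simp only [kd, kh, Pi.add_apply, Pi.smul_apply, smul_eq_mul, Finset.sum_mul]
  have h1 : ∀ i, (if i ∈ S then 0 else ksign A i S * f i * ∑ j,
      if j ∈ insert i S then ksign A j (insert i S) * c j * x ((insert i S).erase j) else 0) =
      ∑ j, if i ∉ S ∧ (i = j ∨ j ∈ S) then
        ksign A i S * f i * (ksign A j (insert i S) * c j * x ((insert i S).erase j)) else 0 := by
    intro i
    by_cases hi : i ∈ S
    · simp [hi]
    · rw [if_neg hi, Finset.mul_sum]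
      refine Finset.sum_congr rfl fun j _ => ?_
      simp [hi, eq_comm]
  have h2 : ∀ j, (if j ∈ S then ksign A j S * c j * ∑ i,
      if i ∈ S.erase j then 0 else ksign A i (S.erase j) * f i * x (insert i (S.erase j)) else 0) =
      ∑ i, if j ∈ S ∧ (i = j ∨ i ∉ S) then
        ksign A j S * c j * (ksign A i (S.erase j) * f i * x (insert i (S.erase j))) else 0 := by
    intro j
    by_cases hj : j ∈ S
    · rw [if_pos hj, Finset.mul_sum]
      refine Finset.sum_congr rfl fun i _ => ?_
      by_cases hij : i = j
      · simp [hj, hij]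
      · by_cases hi : i ∈ S <;> simp [hj, hij, hi]
    · simp [hj]
  rw [Finset.sum_congr rfl fun i _ => h1 i, Finset.sum_congr rfl fun j _ => h2 j,
    Finset.sum_comm (f := fun j i => ite (j ∈ S ∧ (i = j ∨ i ∉ S)) _ _), ← Finset.sum_add_distrib]
  refine Finset.sum_congr rfl fun i _ => ?_
  rw [← Finset.sum_add_distrib, Finset.sum_eq_single i]
  · by_cases hi : i ∈ S
    · have e : S = insert i (S.erase i) := (Finset.insert_erase hi).symm
      have e2 : ksign A i S = ksign A i (S.erase i) := by
        conv_lhs => rw [e]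
        rw [ksign_insert _ _ _ (Finset.notMem_erase i S)]; simp
      simp only [hi, e2, Finset.insert_erase hi]
      simp only [not_true_eq_false, true_or, and_true, if_false, if_true, zero_add]
      linear_combination (c i * f i * x S) * ksign_mul_self (A := A) i (S.erase i)
    · simp only [hi, Finset.erase_insert hi, ksign_insert _ _ _ hi]
      simp only [not_false_eq_true, true_or, and_true, if_false, if_true, add_zero,
        lt_irrefl]
      linear_combination (c i * f i * x S) * ksign_mul_self (A := A) i S
  · intro j _ hji
    by_cases hi : i ∈ S
    · simp [hi, Ne.symm hji]
    by_cases hj : j ∈ S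
    · simp only [hi, hj, Ne.symm hji]
      simp only [not_false_eq_true, or_true, and_self, if_true]
      have hi' : i ∉ S.erase j := fun h => hi (Finset.mem_of_mem_erase h)
      have e : S = insert j (S.erase j) := (Finset.insert_erase hj).symm
      have e3 : ksign A i S = (if j < i then -1 else 1) * ksign A i (S.erase j) := by
        conv_lhs => rw [e]
        rw [ksign_insert _ _ _ (Finset.notMem_erase j S)]
      rw [ksign_insert _ _ _ hi, e3, Finset.erase_insert_of_ne (Ne.symm hji)]
      rcases lt_or_gt_of_ne hji with h | h
      · rw [if_pos h, if_neg h.not_gt]; ring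
      · rw [if_pos h, if_neg h.not_gt]; ring
    · simp [hj, Ne.symm hji]
  · simp

lemma kd_add (f : ι → A) (x y : Finset ι → A) : kd f (x + y) = kd f x + kd f y := by
  funext S
  simp only [kd, Pi.add_apply, ← Finset.sum_add_distrib]
  refine Finset.sum_congr rfl fun i _ => ?_
  split_ifs <;> ring

lemma kd_smul (f : ι → A) (a : A) (x : Finset ι → A) : kd f (a • x) = a • kd f x := by
  funext S
  simp only [kd, Pi.smul_apply, smul_eq_mul, Finset.mul_sum]
  refine Finset.sum_congr rfl fun i _ => ?_
  split_ifs <;> ring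

lemma kd_sub (f : ι → A) (x y : Finset ι → A) : kd f (x - y) = kd f x - kd f y := by
  have := kd_add f x ((-1 : A) • y)
  rw [kd_smul] at this
  simpa [sub_eq_add_neg] using this

lemma kd_mem (f : ι → A) (x : Finset ι → A) (a : Ideal A) (h : ∀ S, x S ∈ a) (S : Finset ι) :
    kd f x S ∈ a := by
  refine Ideal.sum_mem _ fun i _ => ?_
  split_ifs
  · exact a.zero_mem
  · exact a.mul_mem_left _ (h _)

lemma kh_mem (f : ι → A) (x : Finset ι → A) (a : Ideal A) (h : ∀ S, x S ∈ a) (S : Finset ι) :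
    kh f x S ∈ a := by
  refine Ideal.sum_mem _ fun i _ => ?_
  split_ifs
  · exact a.mul_mem_left _ (h _)
  · exact a.zero_mem

/-- `x` lies in exterior degree `i`. -/
def ExtDeg (i : ℕ) (x : Finset ι → A) : Prop := ∀ S, x S ≠ 0 → S.card = i

lemma ExtDeg.kd {f : ι → A} {i : ℕ} {x : Finset ι → A} (h : ExtDeg (i + 1) x) :
    ExtDeg i (kd f x) := by
  intro S hS
  obtain ⟨j, _, hj⟩ := Finset.exists_ne_zero_of_sum_ne_zero hS
  by_cases hjS : j ∈ S
  · simp [hjS] at hj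
  · rw [if_neg hjS] at hj
    have := h _ (right_ne_zero_of_mul hj)
    rw [Finset.card_insert_of_notMem hjS] at this
    omega

lemma ExtDeg.kh {f : ι → A} {i : ℕ} {x : Finset ι → A} (h : ExtDeg i x) :
    ExtDeg (i + 1) (kh f x) := by
  intro S hS
  obtain ⟨j, _, hj⟩ := Finset.exists_ne_zero_of_sum_ne_zero hS
  by_cases hjS : j ∈ S
  · rw [if_pos hjS] at hj
    have := h _ (right_ne_zero_of_mul hj)
    rw [Finset.card_erase_of_mem hjS] at this
    have : 0 < S.card := Finset.card_pos.mpr ⟨j, hjS⟩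
    omega
  · simp [hjS] at hj

end Koszul

/-! ### Koszul homology modulo powers of the variables, and the threshold degree -/

section Threshold

/-- The monomial ideal `(X_0^N, …, X_{j-1}^N)` of `R`. -/
def yI (k : Type*) [Field k] (n N j : ℕ) : Ideal (Rx k n) :=
  Ideal.span ((fun s => monomial s (1 : k)) '' {s | ∃ i : Fin n, i.val < j ∧ s = Finsupp.single i N})

lemma mem_yI {N j : ℕ} {p : Rx k n} :
    p ∈ yI k n N j ↔ ∀ α ∈ p.support, ∃ i : Fin n, i.val < j ∧ N ≤ α i := by
  rw [yI, mem_ideal_span_monomial_image]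
  refine forall₂_congr fun α _ => ?_
  constructor
  · rintro ⟨_, ⟨i, hi, rfl⟩, h⟩
    exact ⟨i, hi, by simpa using h⟩
  · rintro ⟨i, hi, h⟩
    exact ⟨_, ⟨i, hi, rfl⟩, by simpa using h⟩

lemma yI_zero {N : ℕ} {p : Rx k n} (h : p ∈ yI k n N 0) : p = 0 := by
  rw [mem_yI] at h
  by_contra hp
  obtain ⟨α, hα⟩ := MvPolynomial.support_nonempty.mpr hp
  obtain ⟨i, hi, _⟩ := h α hα
  omega

lemma yI_mono {N j : ℕ} : yI k n N j ≤ yI k n N (j + 1) := by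
  intro p hp
  rw [mem_yI] at hp ⊢
  intro α hα
  obtain ⟨i, hi, h⟩ := hp α hα
  exact ⟨i, by omega, h⟩

lemma X_pow_mem_yI {N : ℕ} (i : Fin n) : (X i ^ N : Rx k n) ∈ yI k n N (i.val + 1) := by
  refine Ideal.subset_span ⟨Finsupp.single i N, ⟨i, by omega, rfl⟩, ?_⟩
  simp [X_pow_eq_monomial]

/-- `X_j^N` is a nonzerodivisor modulo `(X_0^N, …, X_{j-1}^N)`. -/
lemma yI_reg {N : ℕ} (j : Fin n) {p : Rx k n} (h : X j ^ N * p ∈ yI k n N j) :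
    p ∈ yI k n N j := by
  rw [mem_yI] at h ⊢
  intro α hα
  obtain ⟨i, hi, h2⟩ := h (Finsupp.single j N + α) (by
    rw [mem_support_iff, X_pow_eq_monomial, coeff_monomial_mul]
    simpa using hα)
  refine ⟨i, hi, ?_⟩
  have : j ≠ i := by rintro rfl; omega
  simpa [Finsupp.single_apply, this] using h2

/-- An element `p` of `(X_0^N, …, X_j^N)` is `X_j^N q + r` with `r ∈ (X_0^N, …, X_{j-1}^N)`, where
the monomials of `X_j^N q` occur in `p`. -/
lemma yI_split {N : ℕ} (j : Fin n) {p : Rx k n} (h : p ∈ yI k n N (j + 1)) :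
    ∃ q r : Rx k n, p = X j ^ N * q + r ∧ r ∈ yI k n N j ∧
      ∀ α, coeff α q ≠ 0 → coeff (Finsupp.single j N + α) p ≠ 0 := by
  refine ⟨p.divMonomial (Finsupp.single j N), p.modMonomial (Finsupp.single j N), ?_, ?_, ?_⟩
  · rw [X_pow_eq_monomial, divMonomial_add_modMonomial]
  · rw [mem_yI] at h ⊢
    intro α hα
    rw [mem_support_iff] at hα
    by_cases hle : Finsupp.single j N ≤ α
    · exact absurd (coeff_modMonomial_of_le p hle) hα
    · rw [coeff_modMonomial_of_not_le p hle] at hα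
      obtain ⟨i, hi, h2⟩ := h α (mem_support_iff.mpr hα)
      refine ⟨i, ?_, h2⟩
      rcases Nat.lt_succ_iff_lt_or_eq.mp hi with h3 | h3
      · exact h3
      · have : i = j := Fin.ext h3
        subst this
        exact absurd (by simpa using h2) hle
  · intro α hα
    rwa [coeff_divMonomial] at hα

lemma yI_split_vec {N : ℕ} (j : Fin n) {p : Finset (Fin (n+1)) → Rx k n}
    (h : ∀ S, p S ∈ yI k n N (j + 1)) :
    ∃ q r : Finset (Fin (n+1)) → Rx k n, p = (X j ^ N : Rx k n) • q + r ∧ (∀ S, r S ∈ yI k n N j) ∧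
      ∀ S α, coeff α (q S) ≠ 0 → coeff (Finsupp.single j N + α) (p S) ≠ 0 := by
  choose q r h1 h2 h3 using fun S => yI_split j (h S)
  exact ⟨q, r, funext h1, h2, h3⟩

lemma extDeg_of_split {N : ℕ} {j : Fin n} {p q : Finset (Fin (n+1)) → Rx k n} {i : ℕ}
    (hp : ExtDeg i p)
    (h : ∀ S α, coeff α (q S) ≠ 0 → coeff (Finsupp.single j N + α) (p S) ≠ 0) : ExtDeg i q := by
  intro S hS
  refine hp S fun h0 => ?_
  obtain ⟨α, hα⟩ := MvPolynomial.ne_zero_iff.mp hS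
  exact h S α hα (by simp [h0])

/-- Vanishing of the Koszul homology `H_i(f; R/(X_0^N, …, X_{j-1}^N))`. -/
def KVan (f : Fin (n+1) → Rx k n) (N j i : ℕ) : Prop :=
  ∀ x : Finset (Fin (n+1)) → Rx k n, ExtDeg i x → (∀ S, kd f x S ∈ yI k n N j) →
    ∃ z, ExtDeg (i + 1) z ∧ ∀ S, (x - kd f z) S ∈ yI k n N j

/-- If `X_j^N ∈ (f)` and `H_{i+1}` vanishes for `R/(X_0^N, …, X_j^N)`, then `H_i` vanishes for
`R/(X_0^N, …, X_{j-1}^N)`: multiplication by `X_j^N` on this `H_i` is injective by the long exact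
sequence, and zero by the homotopy `kh c`. -/
lemma KVan_step (f c : Fin (n+1) → Rx k n) {N i : ℕ} (j : Fin n)
    (hc : ∑ l, c l * f l = X j ^ N) (h : KVan f N (j + 1) (i + 1)) : KVan f N j i := by
  intro x hx hdx
  have key := kd_kh f c x
  rw [hc] at key
  have hh : ∀ S, kh c (kd f x) S ∈ yI k n N j := kh_mem c _ _ hdx
  obtain ⟨z, hz, hz2⟩ := h (kh c x) hx.kh (by
    intro S
    have : kd f (kh c x) S = X j ^ N * x S - kh c (kd f x) S := by
      rw [← smul_eq_mul, ← Pi.smul_apply (X j ^ N : Rx k n) x S, ← key]; simp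
    rw [this]
    exact Ideal.sub_mem _ (Ideal.mul_mem_right _ _ (X_pow_mem_yI j)) (yI_mono (hh S)))
  obtain ⟨q, r, hqr, hr, hq⟩ := yI_split_vec j hz2
  refine ⟨q, extDeg_of_split (p := kh c x - kd f z) ?_ hq, fun S => yI_reg j ?_⟩
  · intro S hS
    by_cases h1 : kh c x S = 0
    · refine hz.kd (f := f) S fun h2 => hS ?_
      simp [h1, h2]
    · exact hx.kh S h1
  · have e : kd f (kh c x) = (X j ^ N : Rx k n) • kd f q + kd f r := by
      rw [← kd_smul, ← kd_add, ← hqr, kd_sub, kd_kd, sub_zero]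
    have e2 : X j ^ N * (x - kd f q) S = kh c (kd f x) S + kd f r S := by
      have k1 := congrFun key S
      rw [e] at k1
      simp only [Pi.add_apply, Pi.smul_apply, smul_eq_mul] at k1
      simp only [Pi.sub_apply]
      linear_combination -k1
    rw [e2]
    exact Ideal.add_mem _ (hh S) (kd_mem f r _ hr S)

/-- `H_i(f; R/(X_0^N, …, X_{j-1}^N)) = 0` for `i ≥ j + 2`, by descending induction on
`j = n - t`; for `j = n` there is nothing in exterior degrees above `n + 1`. -/
lemma KVan_all (f : Fin (n+1) → Rx k n) {N : ℕ}
    (hc : ∀ j : Fin n, ∃ c : Fin (n+1) → Rx k n, ∑ l, c l * f l = X j ^ N) (t : ℕ) :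
    ∀ j i, j + t = n → j + 2 ≤ i → KVan f N j i := by
  induction t with
  | zero =>
    intro j i hj hi x hx _
    have hx0 : x = 0 := by
      funext S
      by_contra hS
      have h1 := hx S hS
      have h2 := Finset.card_le_univ S
      simp at h2
      omega
    refine ⟨0, fun S hS => absurd rfl hS, fun S => ?_⟩
    have : kd f (0 : Finset (Fin (n+1)) → Rx k n) = 0 := by
      funext S; simp [kd]
    simp [this, hx0]
  | succ t ih =>
    intro j i hj hi
    obtain ⟨c, hc⟩ := hc ⟨j, by omega⟩
    exact KVan_step f c ⟨j, by omega⟩ hc (ih (j + 1) (i + 1) (by omega) (by omega))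

/-- Every monomial of every entry of `x` has degree `D`. -/
def PolyDeg (D : ℤ) (x : Finset (Fin (n+1)) → Rx k n) : Prop :=
  ∀ S α, coeff α (x S) ≠ 0 → (α.degree : ℤ) = D

lemma PolyDeg.kd {f : Fin (n+1) → Rx k n} {d : ℕ} (hf : ∀ i, (f i).IsHomogeneous d) {D : ℤ}
    {x : Finset (Fin (n+1)) → Rx k n} (hx : PolyDeg D x) : PolyDeg (D + d) (kd f x) := by
  intro S α hα
  rw [_root_.kd, coeff_sum] at hα
  obtain ⟨i, _, hi⟩ := Finset.exists_ne_zero_of_sum_ne_zero hα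
  by_cases hS : i ∈ S
  · simp [hS] at hi
  rw [if_neg hS] at hi
  have e : ksign (Rx k n) i S * f i * x (insert i S) = f i * (ksign (Rx k n) i S * x (insert i S)) := by
    ring
  have hs : ksign (Rx k n) i S = 1 ∨ ksign (Rx k n) i S = -1 := by
    have := ksign_mul_self (A := Rx k n) i S
    exact mul_self_eq_one_iff.mp this
  have hi' : coeff α (f i * x (insert i S)) ≠ 0 := by
    rcases hs with h | h <;> simpa [h] using hi
  rw [coeff_mul] at hi'
  obtain ⟨⟨a, b⟩, hab, h⟩ := Finset.exists_ne_zero_of_sum_ne_zero hi'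
  have ha := left_ne_zero_of_mul h
  have hb := hx _ _ (right_ne_zero_of_mul h)
  have ha' : a.degree = d := by
    by_contra hne
    exact ha ((hf i).coeff_eq_zero hne)
  rw [← Finset.HasAntidiagonal.mem_antidiagonal.mp hab, map_add, ← hb, ← ha']
  push_cast; ring

/-- `x` is a Koszul cycle of exterior degree `i` with coefficients in
`R/(X_0^N, …, X_{j-1}^N)`, homogeneous of degree `D`, that is not a boundary. -/
def KNon (f : Fin (n+1) → Rx k n) (N j i : ℕ) (D : ℤ) (x : Finset (Fin (n+1)) → Rx k n) : Prop :=
  ExtDeg i x ∧ PolyDeg D x ∧ (∀ S, kd f x S ∈ yI k n N j) ∧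
    ¬ ∃ z, ExtDeg (i + 1) z ∧ ∀ S, (x - kd f z) S ∈ yI k n N j

/-- The connecting homomorphism from `H_{i+1}` of `R/(X_0^N, …, X_j^N)` to `H_i` of
`R/(X_0^N, …, X_{j-1}^N)`, injective as soon as `H_{i+1}` of the latter ring vanishes. It sends
the class of `u` to that of `v`, where `kd f u = X_j^N v` modulo `(X_0^N, …, X_{j-1}^N)`. -/
lemma KNon_step (f : Fin (n+1) → Rx k n) {d : ℕ} (hf : ∀ i, (f i).IsHomogeneous d) {N i : ℕ}
    (j : Fin n) {D : ℤ} (hvan : KVan f N j (i + 1))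
    (h : ∃ x, KNon f N (j + 1) (i + 1) D x) : ∃ x, KNon f N j i (D + d - N) x := by
  obtain ⟨u, hu1, hu2, hu3, hu4⟩ := h
  obtain ⟨v, r, hv, hr, hvs⟩ := yI_split_vec j hu3
  refine ⟨v, extDeg_of_split hu1.kd hvs, ?_, ?_, ?_⟩
  · intro S α hα
    have := hu2.kd hf S _ (hvs S α hα)
    rw [map_add, Finsupp.degree_single] at this
    push_cast at this
    linarith
  · intro S
    apply yI_reg j
    have e : (X j ^ N : Rx k n) • kd f v = kd f (kd f u) - kd f r := by
      rw [← kd_smul, ← kd_sub, hv, add_sub_cancel_right]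
    rw [← smul_eq_mul, ← Pi.smul_apply (X j ^ N : Rx k n) _ S, e, kd_kd, zero_sub]
    exact (Ideal.neg_mem_iff _).mpr (kd_mem f r _ hr S)
  · rintro ⟨w, hw, hw2⟩
    apply hu4
    obtain ⟨z, hz, hz2⟩ := hvan (u - (X j ^ N : Rx k n) • w) (by
        intro S hS
        by_cases h1 : u S = 0
        · refine hw S fun h2 => hS ?_
          simp [h1, h2]
        · exact hu1 S h1) (by
        intro S
        have e : kd f (u - (X j ^ N : Rx k n) • w) S = X j ^ N * (v - kd f w) S + r S := by
          rw [kd_sub, hv, kd_smul]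
          simp only [Pi.sub_apply, Pi.add_apply, Pi.smul_apply, smul_eq_mul]
          ring
        rw [e]
        exact Ideal.add_mem _ (Ideal.mul_mem_left _ _ (hw2 S)) (hr S))
    refine ⟨z, hz, fun S => ?_⟩
    have e : (u - kd f z) S = (u - (X j ^ N : Rx k n) • w - kd f z) S + X j ^ N * w S := by
      simp only [Pi.sub_apply, Pi.smul_apply, smul_eq_mul]
      ring
    rw [e]
    exact Ideal.add_mem _ (yI_mono (hz2 S)) (Ideal.mul_mem_right _ _ (X_pow_mem_yI j))

/-- A nonzero class in the top Koszul homology `H_{n+1}` modulo all the `X_i^N` descends to a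
nonzero class in `H_{j+1}` modulo the first `j = n - t` of these powers. -/
lemma KNon_all (f : Fin (n+1) → Rx k n) {d : ℕ} (hf : ∀ i, (f i).IsHomogeneous d) {N : ℕ}
    (hc : ∀ j : Fin n, ∃ c : Fin (n+1) → Rx k n, ∑ l, c l * f l = X j ^ N) {D : ℤ}
    (h : ∃ x, KNon f N n (n + 1) D x) (t : ℕ) :
    ∀ j, j + t = n → ∃ x, KNon f N j (j + 1) (D + t * (d - N)) x := by
  induction t with
  | zero =>
    intro j hj
    obtain rfl : j = n := by omega
    simpa using h
  | succ t ih =>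
    intro j hj
    have := KNon_step f hf (i := j + 1) ⟨j, by omega⟩
      (KVan_all f hc (t + 1) j (j + 2) hj le_rfl) (ih (j + 1) (by omega))
    convert this using 3
    push_cast; ring

/-- Duality in `R/(X_0^{N+1}, …, X_{n-1}^{N+1})`: a form `g ∉ I` of degree `s` yields a nonzero
element `u` of degree `n N - s` of this ring annihilated by `I`. The coefficient of `u` at `X^γ` is
the value at `X^{(N,…,N) - γ}` of a linear form vanishing on `I` but not at `g`. -/
lemma exists_socle (f : Fin (n+1) → Rx k n) {d s N : ℕ} (hf : ∀ i, (f i).IsHomogeneous d)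
    (hN : ∀ j : Fin n, (X j ^ (N + 1) : Rx k n) ∈ Ideal.span (Set.range f))
    {g : Rx k n} (hg : g.IsHomogeneous s) (hgI : g ∉ Ideal.span (Set.range f)) :
    ∃ u : Rx k n, u ∉ yI k n (N + 1) n ∧ (∀ i, u * f i ∈ yI k n (N + 1) n) ∧
      ∀ α, coeff α u ≠ 0 → (α.degree : ℤ) = n * N - s := by
  set I := Ideal.span (Set.range f) with hI
  obtain ⟨lam, hlg, hlI⟩ := Submodule.exists_le_ker_of_notMem (p := I.restrictScalars k) hgI
  have hlI' : ∀ p ∈ I, lam p = 0 := fun p hp => hlI hp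
  let T : Fin n →₀ ℕ := Finsupp.equivFunOnFinite.symm fun _ => N
  have hT : ∀ i, T i = N := fun i => rfl
  have hTdeg : T.degree = n * N := by
    simp [Finsupp.degree_eq_sum, hT]
  -- `X^T = (X_0 ⋯ X_{n-1})^N` generates the socle; monomials not dividing it lie in `I`
  have hmon : ∀ α : Fin n →₀ ℕ, ¬ α ≤ T → lam (monomial α 1) = 0 := by
    intro α hα
    apply hlI'
    rw [Finsupp.le_def] at hα
    push Not at hα
    obtain ⟨i, hi⟩ := hα
    rw [hT] at hi
    have : (monomial α (1 : k)) = monomial (α - Finsupp.single i (N + 1)) 1 * X i ^ (N + 1) := by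
      rw [X_pow_eq_monomial, monomial_mul, mul_one, tsub_add_cancel_of_le]
      exact Finsupp.single_le_iff.mpr hi
    rw [this]
    exact I.mul_mem_left _ (hN i)
  have hlam : ∀ p : Rx k n, lam p = ∑ α ∈ p.support, coeff α p * lam (monomial α 1) := by
    intro p
    conv_lhs => rw [p.as_sum]
    rw [map_sum]
    refine Finset.sum_congr rfl fun α _ => ?_
    rw [← smul_eq_mul, ← map_smul, smul_monomial, smul_eq_mul, mul_one]
  let u : Rx k n := ∑ α ∈ (Finset.Iic T).filter (fun α => α.degree = s),
    monomial (T - α) (lam (monomial α 1))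
  have hu : ∀ γ, coeff γ u = if γ ≤ T ∧ (T - γ).degree = s then lam (monomial (T - γ) 1) else 0 := by
    intro γ
    simp only [u, coeff_sum, coeff_monomial]
    by_cases h : γ ≤ T ∧ (T - γ).degree = s
    · rw [if_pos h, Finset.sum_eq_single (T - γ)]
      · rw [if_pos (tsub_tsub_cancel_of_le h.1)]
      · intro b hb hne
        rw [if_neg]
        rintro rfl
        apply hne
        rw [tsub_tsub_cancel_of_le]
        simpa using (Finset.mem_filter.mp hb).1
      · intro hn
        exact absurd (by simp [h.2]) hn
    · rw [if_neg h]
      refine Finset.sum_eq_zero fun b hb => ?_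
      rw [if_neg]
      rintro rfl
      simp only [Finset.mem_filter, Finset.mem_Iic] at hb
      exact h ⟨tsub_le_self, by rw [tsub_tsub_cancel_of_le hb.1]; exact hb.2⟩
  refine ⟨u, ?_, ?_, ?_⟩
  · intro hmem
    rw [mem_yI] at hmem
    rw [hlam] at hlg
    obtain ⟨α, hα, hne⟩ := Finset.exists_ne_zero_of_sum_ne_zero hlg
    have h1 : α ≤ T := by
      by_contra h
      exact right_ne_zero_of_mul hne (hmon α h)
    have h2 : α.degree = s := by
      by_contra h
      exact mem_support_iff.mp hα (hg.coeff_eq_zero h)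
    obtain ⟨i, _, hi⟩ := hmem (T - α) (by
      rw [mem_support_iff, hu, tsub_tsub_cancel_of_le h1, if_pos ⟨tsub_le_self, h2⟩]
      exact right_ne_zero_of_mul hne)
    rw [Finsupp.tsub_apply, hT] at hi
    omega
  · intro i
    rw [mem_yI]
    intro γ hγ
    by_contra hcon
    push Not at hcon
    have hγT : γ ≤ T := by
      intro l
      have := hcon l l.2
      rw [hT]; omega
    rw [mem_support_iff] at hγ
    apply hγ
    have hfi : ∀ β, coeff β (f i) ≠ 0 → β.degree = d := fun β h => by
      by_contra h2
      exact h ((hf i).coeff_eq_zero h2)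
    have hsum : T.degree = γ.degree + (T - γ).degree := by
      rw [← map_add, add_tsub_cancel_of_le hγT]
    by_cases hdeg : (T - γ).degree + d = s
    · have e0 : lam (monomial (T - γ) 1 * f i) = 0 :=
        hlI' _ (I.mul_mem_left _ (Ideal.subset_span ⟨i, rfl⟩))
      rw [← e0]
      conv_rhs => rw [(f i).as_sum, Finset.mul_sum, map_sum]
      rw [mul_comm, (f i).as_sum, Finset.sum_mul, coeff_sum, ← (f i).as_sum]
      refine Finset.sum_congr rfl fun β hβ => ?_
      have hb := hfi β (mem_support_iff.mp hβ)
      rw [monomial_mul, one_mul, coeff_monomial_mul', hu]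
      rw [show monomial (T - γ + β) (coeff β (f i)) = coeff β (f i) • monomial (T - γ + β) (1 : k) by
        rw [smul_monomial, smul_eq_mul, mul_one], map_smul, smul_eq_mul]
      by_cases hle : β ≤ γ
      · rw [if_pos hle]
        have e1 : T - (γ - β) = T - γ + β := by
          ext l
          have h1 := hle l
          have h2 := hγT l
          simp only [Finsupp.tsub_apply, Finsupp.add_apply] at *
          omega
        rw [e1, if_pos]
        exact ⟨tsub_le_self.trans hγT, by rw [map_add, hb, hdeg]⟩
      · rw [if_neg hle, hmon, mul_zero]
        intro hle2
        apply hle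
        intro l
        have h1 := hle2 l
        have h2 := hγT l
        simp only [Finsupp.tsub_apply, Finsupp.add_apply] at *
        omega
    · rw [coeff_mul]
      refine Finset.sum_eq_zero fun ⟨a, b⟩ hab => ?_
      have hab := Finset.HasAntidiagonal.mem_antidiagonal.mp hab
      simp only at hab ⊢
      by_contra hne
      have ha := left_ne_zero_of_mul hne
      have hb := hfi b (right_ne_zero_of_mul hne)
      rw [hu] at ha
      split_ifs at ha with h3
      · have e2 : T.degree = a.degree + (T - a).degree := by
          rw [← map_add, add_tsub_cancel_of_le h3.1]
        have e3 : γ.degree = a.degree + b.degree := by rw [← map_add, hab]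
        omega
      · exact ha rfl
  · intro α hα
    rw [hu] at hα
    split_ifs at hα with h
    · have e2 : T.degree = α.degree + (T - α).degree := by
        rw [← map_add, add_tsub_cancel_of_le h.1]
      rw [hTdeg, h.2] at e2
      have : (n * N : ℤ) = α.degree + s := by exact_mod_cast e2
      linarith
    · exact absurd rfl hα

/-- A nonzero class in the first Koszul homology over `R` itself, in the encoding by functions on
subsets, is a syzygy outside `koszulB1 f`. -/
lemma H1_of_KNon (f : Fin (n+1) → Rx k n) {d N : ℕ} {D : ℤ} {x : Finset (Fin (n+1)) → Rx k n}
    (h : KNon f N 0 1 D x) : ∃ e : ℕ, (e : ℤ) = D ∧ H1Nonzero f d (e + d) := by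
  obtain ⟨h1, h2, h3, h4⟩ := h
  have hx : ∃ S, x S ≠ 0 := by
    by_contra hcon
    push Not at hcon
    refine h4 ⟨0, fun S hS => absurd rfl hS, fun S => ?_⟩
    simp [kd, hcon]
  obtain ⟨S, hS⟩ := hx
  obtain ⟨α, hα⟩ := MvPolynomial.ne_zero_iff.mp hS
  have hD := h2 S α hα
  refine ⟨α.degree, hD, fun i => x {i}, α.degree, rfl, ?_, ?_, ?_⟩
  · intro i
    rw [IsHomogeneous, IsWeightedHomogeneous]
    intro β hβ
    have := h2 _ β hβ
    have hw : Finsupp.weight 1 β = β.degree := by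
      rw [Finsupp.degree_eq_weight_one]; rfl
    rw [hw]
    rw [← hD] at this
    exact_mod_cast this
  · have := yI_zero (h3 ∅)
    rw [← this]
    simp [kd, ksign, mul_comm]
  · intro hB
    -- elements of `koszulB1 f` are images under `kd f` of elements of exterior degree `2`
    have key : ∀ a ∈ koszulB1 f, ∃ z : Finset (Fin (n+1)) → Rx k n, ExtDeg 2 z ∧
        ∀ i, kd f z {i} = a i := by
      intro a ha
      induction ha using Submodule.span_induction with
      | mem a ha =>
        obtain ⟨i, j, hij, rfl⟩ := ha
        refine ⟨Pi.single {i, j} 1, ?_, ?_⟩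
        · intro S hS
          by_cases hS2 : S = {i, j}
          · rw [hS2, Finset.card_pair hij.ne]
          · exact absurd (by simp [hS2]) hS
        · intro l
          have hpair : ∀ m, m ≠ l → (({m, l} : Finset (Fin (n+1))) = {i, j} ↔
              (m = i ∧ l = j) ∨ (m = j ∧ l = i)) := by
            intro m hm
            constructor
            · intro h
              have hm1 : m ∈ ({i, j} : Finset (Fin (n+1))) := h ▸ (by simp)
              have hl1 : l ∈ ({i, j} : Finset (Fin (n+1))) := h ▸ (by simp)
              simp only [Finset.mem_insert, Finset.mem_singleton] at hm1 hl1
              rcases hm1 with rfl | rfl <;> rcases hl1 with rfl | rfl <;> simp_all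
            · rintro (⟨rfl, rfl⟩ | ⟨rfl, rfl⟩)
              · rfl
              · exact Finset.pair_comm _ _
          have hterm : ∀ m, (if m ∈ ({l} : Finset (Fin (n+1))) then (0 : Rx k n) else
              ksign (Rx k n) m {l} * f m *
                (Pi.single ({i, j} : Finset (Fin (n+1))) (1 : Rx k n) :
                  Finset (Fin (n+1)) → Rx k n) (insert m {l})) =
              (if m = i then (if l = j then f i else 0) else 0) +
              (if m = j then (if l = i then - f j else 0) else 0) := by
            intro m
            by_cases hml : m = l
            · subst hml
              by_cases hmi : m = i
              · subst hmi; simp [hij.ne]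
              · simp [hmi]
            · have hpair := hpair m hml
              simp only [Finset.mem_singleton, hml, if_false, Pi.single_apply, hpair]
              by_cases hmi : m = i
              · subst hmi
                by_cases hlj : l = j
                · subst hlj; simp [ksign, hij.not_gt, hij.ne, Ne.symm hml]
                · simp [hlj, hij.ne]
              · by_cases hmj : m = j
                · subst hmj
                  by_cases hli : l = i
                  · subst hli; simp [ksign, hij, hml]
                  · simp [hli, hmi]
                · simp [hmi, hmj]
          rw [kd, Finset.sum_congr rfl fun m _ => hterm m, Finset.sum_add_distrib]
          simp [Pi.single_apply]
          split_ifs <;> ring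
      | zero => exact ⟨0, fun S hS => absurd rfl hS, fun i => by simp [kd]⟩
      | add a b _ _ iha ihb =>
        obtain ⟨z, hz, hz2⟩ := iha
        obtain ⟨w, hw, hw2⟩ := ihb
        refine ⟨z + w, ?_, fun i => by rw [kd_add, Pi.add_apply, Pi.add_apply, hz2, hw2]⟩
        intro S hS
        by_cases hzS : z S = 0
        · exact hw S fun h => hS (by simp [hzS, h])
        · exact hz S hzS
      | smul r a _ iha =>
        obtain ⟨z, hz, hz2⟩ := iha
        refine ⟨r • z, ?_, fun i => by rw [kd_smul, Pi.smul_apply, Pi.smul_apply, hz2]⟩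
        intro S hS
        exact hz S fun h => hS (by simp [h])
    obtain ⟨z, hz, hz2⟩ := key _ hB
    refine h4 ⟨z, hz, fun S => ?_⟩
    have : (x - kd f z) S = 0 := by
      by_cases hS1 : S.card = 1
      · obtain ⟨i, rfl⟩ := Finset.card_eq_one.mp hS1
        simp [hz2]
      · have e1 : x S = 0 := by
          by_contra h; exact hS1 (h1 S h)
        have e2 : kd f z S = 0 := by
          by_contra h; exact hS1 (hz.kd (f := f) S h)
        simp [e1, e2]
    rw [this]
    exact Ideal.zero_mem _

/-- If `(R/I)_s ≠ 0` then `H_1` is nonzero in degree `n(d-1) - s + d`. -/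
lemma exists_H1 (f : Fin (n+1) → Rx k n) {d s : ℕ} (hf : ∀ i, (f i).IsHomogeneous d)
    (hprim : ∃ N : ℕ, (mIdeal k n) ^ N ≤ Ideal.span (Set.range f))
    {g : Rx k n} (hg : g.IsHomogeneous s) (hgI : g ∉ Ideal.span (Set.range f)) :
    ∃ e : ℕ, (e : ℤ) + s = n * (d - 1) ∧ H1Nonzero f d (e + d) := by
  obtain ⟨N, hN⟩ := hprim
  have hN' : ∀ j : Fin n, (X j ^ (N + 1) : Rx k n) ∈ Ideal.span (Set.range f) := by
    intro j
    have hj : (X j : Rx k n) ∈ mIdeal k n := Ideal.subset_span (Set.mem_range_self j)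
    rw [pow_succ]
    exact Ideal.mul_mem_right _ _ (hN (Ideal.pow_mem_pow hj N))
  obtain ⟨u, hu1, hu2, hu3⟩ := exists_socle f hf hN' hg hgI
  -- in top exterior degree there are no boundaries, and a cycle is an element killed by all `f_i`
  have hstart : KNon f (N + 1) n (n + 1) (n * N - s)
      (Pi.single Finset.univ u : Finset (Fin (n+1)) → Rx k n) := by
    refine ⟨?_, ?_, ?_, ?_⟩
    · intro S hS
      by_cases h : S = Finset.univ
      · simp [h]
      · exact absurd (by simp [h]) hS
    · intro S α hα
      by_cases h : S = Finset.univ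
      · subst h
        exact hu3 α (by simpa using hα)
      · exact absurd (by simp [h]) hα
    · intro S
      refine Ideal.sum_mem _ fun i _ => ?_
      split_ifs
      · exact Ideal.zero_mem _
      · rw [Pi.single_apply]
        split_ifs
        · rw [mul_assoc, mul_comm (f i)]
          exact Ideal.mul_mem_left _ _ (hu2 i)
        · simp
    · rintro ⟨z, hz, hz2⟩
      have : z = 0 := by
        funext S
        by_contra hS
        have h1 := hz S hS
        have h2 := Finset.card_le_univ S
        simp at h2
        omega
      have h3 := hz2 Finset.univ
      rw [this] at h3
      apply hu1
      simpa [kd] using h3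
  have hc : ∀ j : Fin n, ∃ c : Fin (n+1) → Rx k n, ∑ l, c l * f l = X j ^ (N + 1) := fun j =>
    (Ideal.mem_span_range_iff_exists_fun).mp (hN' j)
  obtain ⟨x, hx⟩ := KNon_all f hf hc ⟨_, hstart⟩ n 0 (by omega)
  obtain ⟨e, he, hH⟩ := H1_of_KNon f (d := d) hx
  refine ⟨e, ?_, hH⟩
  rw [he]
  push_cast; ring

/-- Every form of degree `μ + d` belongs to `I` when `μ ≥ μ₀(I)`. -/
lemma mem_of_threshold (f : Fin (n+1) → Rx k n) {d μ : ℕ} (hn : 2 ≤ n) (hd : 1 ≤ d)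
    (hf : ∀ i, (f i).IsHomogeneous d)
    (hprim : ∃ N : ℕ, (mIdeal k n) ^ N ≤ Ideal.span (Set.range f))
    (hμ : ((n - 1) * (d - 1) + d : ℕ∞) ≤ (μ : ℕ∞) + indegE {ν | H1Nonzero f d ν})
    {g : Rx k n} (hg : g.IsHomogeneous (μ + d)) : g ∈ Ideal.span (Set.range f) := by
  by_contra hgI
  obtain ⟨e, he, hH⟩ := exists_H1 f hf hprim hg hgI
  have h1 : indegE {ν | H1Nonzero f d ν} ≤ ((e + d : ℕ) : ℕ∞) := sInf_le ⟨_, hH, rfl⟩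
  have h2 : (((n - 1) * (d - 1) + d : ℕ) : ℕ∞) ≤ ((μ + (e + d) : ℕ) : ℕ∞) := by
    push_cast
    push_cast at h1
    exact hμ.trans (add_le_add_right h1 _)
  have h3 : (n - 1) * (d - 1) + d ≤ μ + (e + d) := by exact_mod_cast h2
  obtain ⟨n, rfl⟩ := Nat.exists_eq_add_of_le hn
  obtain ⟨d, rfl⟩ := Nat.exists_eq_add_of_le hd
  have e1 : 2 + n - 1 = n + 1 := by omega
  have e2 : 1 + d - 1 = d := by omega
  rw [e1, e2] at h3
  push_cast at he
  have h4 : (((n + 1) * d + (1 + d) : ℕ) : ℤ) ≤ ((μ + (e + (1 + d)) : ℕ) : ℤ) := by exact_mod_cast h3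
  push_cast at h4
  nlinarith

end Threshold

/-! ### Components with respect to the `X`-degree -/

section Grading

lemma homogeneousComponent_homog_mul {c : Rx k n} {e : ℕ} (hc : c.IsHomogeneous e) (ν : ℕ)
    (p : Rx k n) : homogeneousComponent ν (c * p) =
      if e ≤ ν then c * homogeneousComponent (ν - e) p else 0 := by
  induction p using MvPolynomial.induction_on' with
  | monomial u a =>
    have hm : (monomial u a : Rx k n) ∈ homogeneousSubmodule (Fin n) k u.degree :=
      isHomogeneous_monomial a rfl
    have h1 : c * monomial u a ∈ homogeneousSubmodule (Fin n) k (e + u.degree) := hc.mul hm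
    rw [homogeneousComponent_of_mem h1, homogeneousComponent_of_mem hm]
    by_cases hle : e ≤ ν
    · by_cases h2 : ν = e + u.degree
      · rw [if_pos h2, if_pos hle, if_pos (by omega)]
      · rw [if_neg h2, if_pos hle, if_neg (by omega), mul_zero]
    · rw [if_neg hle, if_neg (by omega)]
  | add p q hp hq =>
    rw [mul_add, map_add, hp, hq, map_add]
    split_ifs <;> ring

/-- The component of `X`-degree `ν` of an element of `S`. -/
def comp (ν : ℕ) (P : Sx k n) : Sx k n :=
  ∑ a ∈ P.support, monomial a (homogeneousComponent ν (coeff a P))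

lemma coeff_comp (ν : ℕ) (P : Sx k n) (a : Fin (n+1) →₀ ℕ) :
    coeff a (comp ν P) = homogeneousComponent ν (coeff a P) := by
  simp only [comp, coeff_sum, coeff_monomial]
  rw [Finset.sum_ite_eq']
  split_ifs with h
  · rfl
  · rw [notMem_support_iff.mp h, map_zero]

lemma comp_add (ν : ℕ) (P Q : Sx k n) : comp ν (P + Q) = comp ν P + comp ν Q := by
  refine MvPolynomial.ext _ _ fun a => ?_
  simp [coeff_comp]

lemma comp_zero (ν : ℕ) : comp ν (0 : Sx k n) = 0 := by
  refine MvPolynomial.ext _ _ fun a => ?_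
  simp [coeff_comp]

lemma XHomog_comp (ν : ℕ) (P : Sx k n) : XHomog ν (comp ν P) := fun a => by
  rw [coeff_comp]
  exact homogeneousComponent_isHomogeneous _ _

lemma comp_of_XHomog {e : ℕ} {P : Sx k n} (h : XHomog e P) (ν : ℕ) :
    comp ν P = if ν = e then P else 0 := by
  refine MvPolynomial.ext _ _ fun a => ?_
  rw [coeff_comp, homogeneousComponent_of_mem (h a)]
  split_ifs <;> simp

lemma totalDegree_comp_le (ν : ℕ) (P : Sx k n) : (comp ν P).totalDegree ≤ P.totalDegree := by
  refine Finset.sup_mono ?_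
  intro a ha
  rw [mem_support_iff, coeff_comp] at ha
  rw [mem_support_iff]
  intro h
  exact ha (by rw [h, map_zero])

lemma comp_monomial_mul {c : Rx k n} {e : ℕ} (hc : c.IsHomogeneous e) (a : Fin (n+1) →₀ ℕ)
    (ν : ℕ) (P : Sx k n) : comp ν (monomial a c * P) =
      if e ≤ ν then monomial a c * comp (ν - e) P else 0 := by
  refine MvPolynomial.ext _ _ fun b => ?_
  rw [coeff_comp, coeff_monomial_mul']
  by_cases hab : a ≤ b
  · rw [if_pos hab, homogeneousComponent_homog_mul hc]
    split_ifs
    · rw [coeff_monomial_mul', if_pos hab, coeff_comp]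
    · simp
  · rw [if_neg hab, map_zero]
    split_ifs
    · rw [coeff_monomial_mul', if_neg hab]
    · simp

/-- Every element of `S` is a sum of terms `c·T^a` with `c` homogeneous. -/
lemma homog_induction {p : Sx k n → Prop}
    (hmon : ∀ a e (c : Rx k n), c.IsHomogeneous e → p (monomial a c))
    (hadd : ∀ P Q, p P → p Q → p (P + Q)) (Q : Sx k n) : p Q := by
  induction Q using MvPolynomial.induction_on' with
  | monomial u c =>
    induction c using MvPolynomial.induction_on' with
    | monomial v r => exact hmon u v.degree _ (isHomogeneous_monomial r rfl)
    | add c1 c2 h1 h2 => rw [map_add]; exact hadd _ _ h1 h2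
  | add P Q hP hQ => exact hadd _ _ hP hQ

/-- An ideal generated by a set whose elements have all their `X`-components in the ideal is
stable under taking `X`-components. -/
lemma comp_span {G : Set (Sx k n)} (hG : ∀ P ∈ G, ∀ ν, comp ν P ∈ Ideal.span G) {P : Sx k n}
    (hP : P ∈ Ideal.span G) : ∀ ν, comp ν P ∈ Ideal.span G := by
  induction hP using Submodule.span_induction with
  | mem P hP => exact hG P hP
  | zero => intro ν; rw [comp_zero]; exact Ideal.zero_mem _
  | add P Q _ _ hP hQ => intro ν; rw [comp_add]; exact Ideal.add_mem _ (hP ν) (hQ ν)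
  | smul Q P _ hP =>
    induction Q using homog_induction with
    | hmon a e c hc =>
      intro ν
      rw [smul_eq_mul, comp_monomial_mul hc]
      split_ifs
      · exact Ideal.mul_mem_left _ _ (hP _)
      · exact Ideal.zero_mem _
    | hadd Q1 Q2 h1 h2 =>
      intro ν
      rw [add_smul, comp_add]
      exact Ideal.add_mem _ (h1 ν) (h2 ν)

lemma XHomog_C_mul_X {e : ℕ} {c : Rx k n} (hc : c.IsHomogeneous e) (i : Fin (n+1)) :
    XHomog e (C c * X i : Sx k n) := by
  intro a
  rw [coeff_C_mul, coeff_X]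
  split_ifs
  · simpa using hc
  · simpa using isHomogeneous_zero _ _ _

lemma XHomog.sub {e : ℕ} {P Q : Sx k n} (hP : XHomog e P) (hQ : XHomog e Q) :
    XHomog e (P - Q) := fun a => by rw [coeff_sub]; exact (hP a).sub (hQ a)

lemma XHomog.add {e : ℕ} {P Q : Sx k n} (hP : XHomog e P) (hQ : XHomog e Q) :
    XHomog e (P + Q) := fun a => by rw [coeff_add]; exact (hP a).add (hQ a)

lemma XHomog.monomial_mul {e e' : ℕ} {c : Rx k n} (hc : c.IsHomogeneous e) {P : Sx k n}
    (hP : XHomog e' P) (a : Fin (n+1) →₀ ℕ) : XHomog (e + e') (monomial a c * P) := by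
  intro b
  rw [coeff_monomial_mul']
  split_ifs
  · exact hc.mul (hP _)
  · exact isHomogeneous_zero _ _ _

lemma XHomog_zero (e : ℕ) : XHomog e (0 : Sx k n) := fun a => by
  rw [coeff_zero]; exact isHomogeneous_zero _ _ _

lemma comp_KS {f : Fin (n+1) → Rx k n} {d : ℕ} (hf : ∀ i, (f i).IsHomogeneous d) {P : Sx k n}
    (hP : P ∈ KS f) (ν : ℕ) : comp ν P ∈ KS f := by
  refine comp_span ?_ hP ν
  rintro P ⟨i, j, hij, rfl⟩ ν
  rw [comp_of_XHomog ((XHomog_C_mul_X (hf i) j).sub (XHomog_C_mul_X (hf j) i))]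
  split_ifs
  · exact Ideal.subset_span ⟨i, j, hij, rfl⟩
  · exact Ideal.zero_mem _

lemma comp_J1 {f : Fin (n+1) → Rx k n} {d : ℕ} (hf : ∀ i, (f i).IsHomogeneous d) {P : Sx k n}
    (hP : P ∈ J1 f) (ν : ℕ) : comp ν P ∈ J1 f := by
  refine comp_span ?_ hP ν
  rintro P ⟨a, ha, rfl⟩ ν
  refine Ideal.subset_span ⟨fun i => homogeneousComponent ν (a i), ?_, ?_⟩
  · have := congrArg (homogeneousComponent (ν + d)) ha
    rw [map_sum, map_zero] at this
    rw [← this]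
    refine Finset.sum_congr rfl fun i _ => ?_
    rw [mul_comm (a i), homogeneousComponent_homog_mul (hf i), if_pos (by omega),
      Nat.add_sub_cancel, mul_comm]
  · refine MvPolynomial.ext _ _ fun b => ?_
    rw [coeff_comp, coeff_sum, coeff_sum, map_sum]
    refine Finset.sum_congr rfl fun i _ => ?_
    rw [coeff_C_mul, coeff_C_mul, coeff_X]
    split_ifs <;> simp

end Grading

/-! ### The saturated ideal `J` and the ideals `J⟨ℓ⟩` -/

section Saturation

/-- Since `m` is finitely generated, membership in `J` can be tested on powers of each variable. -/
lemma Jset_iff {f : Fin (n+1) → Rx k n} {P : Sx k n} :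
    P ∈ Jset f ↔ ∀ i : Fin n, ∃ N : ℕ, C (X i ^ N : Rx k n) * P ∈ J1 f := by
  constructor
  · rintro ⟨N, hN⟩ i
    refine ⟨N, hN _ ?_⟩
    rw [C_pow]
    have hi : (C (X i : Rx k n) : Sx k n) ∈ mS k n := Ideal.subset_span (Set.mem_range_self i)
    exact Ideal.pow_mem_pow hi N
  · intro h
    let c : Ideal (Sx k n) := (J1 f).colon (Ideal.span {P})
    have hc : ∀ Q, Q ∈ c ↔ Q * P ∈ J1 f := fun Q => Ideal.mem_colon_span_singleton
    have hle : mS k n ≤ c.radical := by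
      refine Ideal.span_le.mpr ?_
      rintro _ ⟨i, rfl⟩
      obtain ⟨N, hN⟩ := h i
      refine ⟨N, ?_⟩
      rw [hc, ← C_pow]
      exact hN
    obtain ⟨N, hN⟩ := Ideal.exists_pow_le_of_le_radical_of_fg hle
      ((Submodule.fg_def.mpr ⟨_, Set.finite_range _, rfl⟩))
    exact ⟨N, fun Q hQ => (hc Q).mp (hN hQ)⟩

variable {f : Fin (n+1) → Rx k n}

lemma J1_subset_Jset {P : Sx k n} (h : P ∈ J1 f) : P ∈ Jset f :=
  Jset_iff.mpr fun _ => ⟨0, Ideal.mul_mem_left _ _ h⟩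

lemma Jset_mul {P : Sx k n} (Q : Sx k n) (h : P ∈ Jset f) : Q * P ∈ Jset f := by
  rw [Jset_iff] at h ⊢
  intro i
  obtain ⟨N, hN⟩ := h i
  refine ⟨N, ?_⟩
  rw [mul_left_comm]
  exact Ideal.mul_mem_left _ _ hN

lemma Jset_add {P Q : Sx k n} (hP : P ∈ Jset f) (hQ : Q ∈ Jset f) : P + Q ∈ Jset f := by
  rw [Jset_iff] at hP hQ ⊢
  intro i
  obtain ⟨N, hN⟩ := hP i
  obtain ⟨M, hM⟩ := hQ i
  refine ⟨N + M, ?_⟩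
  have : (C (X i ^ (N + M) : Rx k n) * (P + Q) : Sx k n) =
      C (X i ^ M) * (C (X i ^ N) * P) + C (X i ^ N) * (C (X i ^ M) * Q) := by
    rw [pow_add, C_mul]; ring
  rw [this]
  exact Ideal.add_mem _ (Ideal.mul_mem_left _ _ hN) (Ideal.mul_mem_left _ _ hM)

lemma Jset_sum {ι : Type*} (s : Finset ι) {P : ι → Sx k n} (h : ∀ i ∈ s, P i ∈ Jset f) :
    ∑ i ∈ s, P i ∈ Jset f :=
  Finset.sum_induction _ (· ∈ Jset f) (fun _ _ => Jset_add)
    (J1_subset_Jset (Ideal.zero_mem _)) h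

lemma Jset_comp {d : ℕ} (hf : ∀ i, (f i).IsHomogeneous d) {P : Sx k n} (h : P ∈ Jset f) (ν : ℕ) :
    comp ν P ∈ Jset f := by
  rw [Jset_iff] at h ⊢
  intro i
  obtain ⟨N, hN⟩ := h i
  refine ⟨N, ?_⟩
  have h1 := comp_J1 hf hN (ν + N)
  rw [C_apply, comp_monomial_mul (isHomogeneous_X_pow i N), if_pos (by omega),
    Nat.add_sub_cancel] at h1
  exact h1

/-- `J` is saturated: membership may be tested after multiplication by the forms `f_i`, because
they generate an `m`-primary ideal. -/
lemma Jset_of_mul (hprim : ∃ N : ℕ, (mIdeal k n) ^ N ≤ Ideal.span (Set.range f)) {P : Sx k n}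
    (h : ∀ i, C (f i) * P ∈ Jset f) : P ∈ Jset f := by
  obtain ⟨N, hN⟩ := hprim
  rw [Jset_iff]
  intro j
  have hj : (X j : Rx k n) ∈ mIdeal k n := Ideal.subset_span (Set.mem_range_self j)
  obtain ⟨c, hc⟩ := (Ideal.mem_span_range_iff_exists_fun).mp (hN (Ideal.pow_mem_pow hj N))
  have h1 : C (X j ^ N : Rx k n) * P ∈ Jset f := by
    rw [← hc, map_sum, Finset.sum_mul]
    refine Jset_sum _ fun i _ => ?_
    rw [C_mul, mul_assoc]
    exact Jset_mul _ (h i)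
  obtain ⟨M, hM⟩ := Jset_iff.mp h1 j
  refine ⟨M + N, ?_⟩
  rw [pow_add, C_mul, mul_assoc]
  exact hM

/-- An `X`-homogeneous component of an element of `J⟨ℓ⟩` is a combination, with coefficients in
`k[T_0, …, T_n]`, of elements of `J` of `T`-degree at most `ℓ` and of the same `X`-degree. -/
lemma comp_Jl_mem_closure {d : ℕ} (hf : ∀ i, (f i).IsHomogeneous d) {ℓ : ℕ} {P : Sx k n}
    (hP : P ∈ Jl f ℓ) : ∀ ν, comp ν P ∈ AddSubmonoid.closure
      {Q : Sx k n | ∃ a P, P ∈ Jset f ∧ P.totalDegree ≤ ℓ ∧ XHomog ν P ∧ Q = monomial a 1 * P} := by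
  induction hP using Submodule.span_induction with
  | mem P hP =>
    intro ν
    refine AddSubmonoid.subset_closure ⟨0, comp ν P, Jset_comp hf hP.1 ν,
      (totalDegree_comp_le ν P).trans hP.2, XHomog_comp ν P, ?_⟩
    rw [← C_apply, C_1, one_mul]
  | zero => intro ν; rw [comp_zero]; exact AddSubmonoid.zero_mem _
  | add P Q _ _ hP hQ => intro ν; rw [comp_add]; exact AddSubmonoid.add_mem _ (hP ν) (hQ ν)
  | smul Q P _ hP =>
    induction Q using homog_induction with
    | hmon a e c hc =>
      intro ν
      rw [smul_eq_mul, comp_monomial_mul hc]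
      split_ifs with hle
      · have hy := hP (ν - e)
        generalize comp (ν - e) P = y at hy
        induction hy using AddSubmonoid.closure_induction with
        | mem Q hQ =>
          obtain ⟨b, P, h1, h2, h3, rfl⟩ := hQ
          refine AddSubmonoid.subset_closure ⟨a + b, C c * P, Jset_mul _ h1, ?_, ?_, ?_⟩
          · refine (totalDegree_mul _ _).trans ?_
            rw [totalDegree_C, zero_add]
            exact h2
          · have := XHomog.monomial_mul hc h3 0
            rwa [← C_apply, Nat.add_sub_cancel' hle] at this
          · rw [← mul_assoc, ← mul_assoc, C_apply, MvPolynomial.monomial_mul,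
              MvPolynomial.monomial_mul]
            simp
        | zero => rw [mul_zero]; exact AddSubmonoid.zero_mem _
        | add x y _ _ hx hy => rw [mul_add]; exact AddSubmonoid.add_mem _ hx hy
      · exact AddSubmonoid.zero_mem _
    | hadd Q1 Q2 h1 h2 =>
      intro ν
      rw [add_smul, comp_add]
      exact AddSubmonoid.add_mem _ (h1 ν) (h2 ν)

lemma comp_Jl {d : ℕ} (hf : ∀ i, (f i).IsHomogeneous d) {ℓ : ℕ} {P : Sx k n}
    (hP : P ∈ Jl f ℓ) (ν : ℕ) : comp ν P ∈ Jl f ℓ := by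
  refine comp_span ?_ hP ν
  rintro P ⟨h1, h2⟩ ν
  exact Ideal.subset_span ⟨Jset_comp hf h1 ν, (totalDegree_comp_le ν P).trans h2⟩

lemma Koszul_mem_KS (i j : Fin (n+1)) : (C (f i) * X j - C (f j) * X i : Sx k n) ∈ KS f := by
  rcases lt_trichotomy i j with h | rfl | h
  · exact Ideal.subset_span ⟨i, j, h, rfl⟩
  · rw [sub_self]; exact Ideal.zero_mem _
  · rw [← neg_sub]
    exact (Ideal.neg_mem_iff _).mpr (Ideal.subset_span ⟨j, i, h, rfl⟩)

lemma KS_le_J1 : KS f ≤ J1 f := by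
  refine Ideal.span_le.mpr ?_
  rintro _ ⟨i, j, hij, rfl⟩
  refine Ideal.subset_span ⟨Pi.single j (f i) - Pi.single i (f j), ?_, ?_⟩
  · simp [sub_mul, Finset.sum_sub_distrib, Pi.single_apply, mul_comm (f j)]
  · simp [sub_mul, Finset.sum_sub_distrib, Pi.single_apply, apply_ite C]

lemma J1_le_Jl {ℓ : ℕ} (hℓ : 1 ≤ ℓ) : J1 f ≤ Jl f ℓ := by
  refine Ideal.span_le.mpr ?_
  rintro _ ⟨a, ha, rfl⟩
  refine Ideal.subset_span ⟨J1_subset_Jset (Ideal.subset_span ⟨a, ha, rfl⟩), ?_⟩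
  refine totalDegree_finsetSum_le fun i _ => ?_
  refine (totalDegree_mul _ _).trans ?_
  rw [totalDegree_C, totalDegree_X]
  omega

lemma J1_coeff_zero {P : Sx k n} (h : P ∈ J1 f) : coeff 0 P = 0 := by
  have hle : J1 f ≤ RingHom.ker (constantCoeff (σ := Fin (n+1)) (R := Rx k n)) := by
    refine Ideal.span_le.mpr ?_
    rintro _ ⟨a, ha, rfl⟩
    simp [RingHom.mem_ker]
  exact hle h

/-- Elements of `J` have no term of `T`-degree `0`; saturating needs at least one variable `X_i`. -/
lemma Jset_coeff_zero (hn : 2 ≤ n) {P : Sx k n} (h : P ∈ Jset f) : coeff 0 P = 0 := by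
  obtain ⟨N, hN⟩ := Jset_iff.mp h ⟨0, by omega⟩
  have := J1_coeff_zero hN
  rw [coeff_C_mul] at this
  exact (mul_eq_zero.mp this).resolve_left (pow_ne_zero _ (X_ne_zero _))

lemma Jl_coeff_zero (hn : 2 ≤ n) {ℓ : ℕ} {P : Sx k n} (h : P ∈ Jl f ℓ) : coeff 0 P = 0 := by
  have hle : Jl f ℓ ≤ RingHom.ker (constantCoeff (σ := Fin (n+1)) (R := Rx k n)) :=
    Ideal.span_le.mpr fun Q hQ => Jset_coeff_zero hn hQ.1
  exact hle h

end Saturation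

/-! ### The downgrading map -/

section Downgrading

variable {f : Fin (n+1) → Rx k n}

/-- The image under `Δ` of the term `c·T^α`. -/
def downTerm (f : Fin (n+1) → Rx k n) (α : Fin (n+1) →₀ ℕ) (c : Rx k n) : Sx k n :=
  dite (α = 0) (fun _ => 0) (fun h =>
    letI i := α.support.min' (Finsupp.support_nonempty_iff.mpr h)
    monomial (α - Finsupp.single i 1) (c * f i))

lemma down_eq (P : Sx k n) : down f P = ∑ α ∈ P.support, downTerm f α (coeff α P) := rfl

lemma downTerm_add (α : Fin (n+1) →₀ ℕ) (c c' : Rx k n) :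
    downTerm f α (c + c') = downTerm f α c + downTerm f α c' := by
  unfold downTerm
  split_ifs
  · simp
  · rw [add_mul, map_add]

lemma downTerm_zero (α : Fin (n+1) →₀ ℕ) : downTerm f α 0 = 0 := by
  unfold downTerm
  split_ifs <;> simp

lemma down_eq_of_subset {P : Sx k n} {s : Finset (Fin (n+1) →₀ ℕ)} (h : P.support ⊆ s) :
    down f P = ∑ α ∈ s, downTerm f α (coeff α P) := by
  rw [down_eq]
  refine Finset.sum_subset h fun α _ hα => ?_
  rw [notMem_support_iff.mp hα, downTerm_zero]

lemma down_add (P Q : Sx k n) : down f (P + Q) = down f P + down f Q := by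
  classical
  rw [down_eq_of_subset (support_add (p := P) (q := Q)),
    down_eq_of_subset (Finset.subset_union_left (s₂ := Q.support)),
    down_eq_of_subset (Finset.subset_union_right (s₁ := P.support)), ← Finset.sum_add_distrib]
  exact Finset.sum_congr rfl fun α _ => by rw [coeff_add, downTerm_add]

lemma down_zero : down f (0 : Sx k n) = 0 := by simp [down_eq]

lemma down_sub (P Q : Sx k n) : down f (P - Q) = down f P - down f Q := by
  rw [eq_sub_iff_add_eq, ← down_add, sub_add_cancel]

lemma down_monomial (α : Fin (n+1) →₀ ℕ) (c : Rx k n) :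
    down f (monomial α c) = downTerm f α c := by
  rw [down_eq_of_subset support_monomial_subset, Finset.sum_singleton, coeff_monomial, if_pos rfl]

/-- Modulo `KS`, `Δ(T_i Q) = f_i Q` for every `i`, regardless of the index used in the definition
of `Δ`. -/
lemma down_X_mul (i : Fin (n+1)) (Q : Sx k n) :
    down f (X i * Q) - C (f i) * Q ∈ KS f := by
  induction Q using MvPolynomial.induction_on' with
  | monomial a c =>
    have hne : Finsupp.single i 1 + a ≠ 0 := by
      intro h
      have := DFunLike.congr_fun h i
      simp at this
    rw [show (X i : Sx k n) = monomial (Finsupp.single i 1) 1 from rfl, monomial_mul, one_mul,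
      down_monomial, downTerm, dif_neg hne]
    have hmem := Finset.min'_mem _ (Finsupp.support_nonempty_iff.mpr hne)
    generalize (Finsupp.single i 1 + a).support.min' (Finsupp.support_nonempty_iff.mpr hne) = l
      at hmem ⊢
    rw [Finsupp.mem_support_iff] at hmem
    by_cases hli : l = i
    · rw [hli, add_tsub_cancel_left, C_mul_monomial, mul_comm c, sub_self]
      exact Ideal.zero_mem _
    · have hal : Finsupp.single l 1 ≤ a := by
        rw [Finsupp.single_le_iff]
        simp only [Finsupp.add_apply, Finsupp.single_apply, if_neg (Ne.symm hli), zero_add] at hmem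
        omega
      obtain ⟨b, rfl⟩ := exists_add_of_le hal
      have e1 : Finsupp.single i 1 + (Finsupp.single l 1 + b) - Finsupp.single l 1 =
          Finsupp.single i 1 + b := by
        rw [add_left_comm, add_tsub_cancel_left]
      rw [e1]
      have e2 : monomial (Finsupp.single i 1 + b) (c * f l) -
          C (f i) * monomial (Finsupp.single l 1 + b) c =
          monomial b c * (C (f l) * X i - C (f i) * X l) := by
        rw [mul_sub, mul_left_comm, mul_left_comm (monomial b c), mul_comm (monomial b c) (X i),
          mul_comm (monomial b c) (X l), X, X, monomial_mul, monomial_mul, one_mul, mul_comm c,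
          C_mul_monomial, C_mul_monomial]
      rw [e2]
      exact Ideal.mul_mem_left _ _ (Koszul_mem_KS l i)
  | add P Q hP hQ =>
    rw [mul_add, down_add, mul_add, add_sub_add_comm]
    exact Ideal.add_mem _ hP hQ

lemma down_sum_X_mul (Q : Fin (n+1) → Sx k n) :
    down f (∑ i, X i * Q i) - ∑ i, C (f i) * Q i ∈ KS f := by
  have : down f (∑ i, X i * Q i) = ∑ i, down f (X i * Q i) :=
    map_sum (AddMonoidHom.mk' (down f) down_add) _ _
  rw [this, ← Finset.sum_sub_distrib]
  exact Ideal.sum_mem _ fun i _ => down_X_mul i (Q i)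

lemma exists_sum_X_mul {P : Sx k n} (h : coeff 0 P = 0) :
    ∃ Q : Fin (n+1) → Sx k n, P = ∑ i, X i * Q i := by
  have : P ∈ Ideal.span (Set.range (X : Fin (n+1) → Sx k n)) := by
    rw [← Set.image_univ, mem_ideal_span_X_image]
    intro m hm
    by_contra hcon
    push Not at hcon
    have : m = 0 := Finsupp.ext fun i => hcon i (Set.mem_univ _)
    rw [this] at hm
    exact mem_support_iff.mp hm h
  obtain ⟨Q, hQ⟩ := Ideal.mem_span_range_iff_exists_fun.mp this
  exact ⟨Q, by rw [← hQ]; exact Finset.sum_congr rfl fun i _ => mul_comm _ _⟩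

/-- Modulo `KS`, the map `Δ` is `S`-linear on polynomials without term of `T`-degree `0`. -/
lemma down_mul (Q : Sx k n) {P : Sx k n} (h : coeff 0 P = 0) :
    down f (Q * P) - Q * down f P ∈ KS f := by
  obtain ⟨A, rfl⟩ := exists_sum_X_mul h
  have h1 := down_sum_X_mul (f := f) A
  have h2 := down_sum_X_mul (f := f) fun i => Q * A i
  have e : Q * ∑ i, X i * A i = ∑ i, X i * (Q * A i) := by
    rw [Finset.mul_sum]; exact Finset.sum_congr rfl fun i _ => by ring
  have e2 : ∑ i, C (f i) * (Q * A i) = Q * ∑ i, C (f i) * A i := by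
    rw [Finset.mul_sum]; exact Finset.sum_congr rfl fun i _ => by ring
  rw [e]
  rw [e2] at h2
  have := Ideal.sub_mem _ h2 (Ideal.mul_mem_left _ Q h1)
  convert this using 1
  ring

/-- Modulo `KS`, `f_i P = T_i Δ(P)`; this is how, the ideal `J` being saturated,
membership in `J` passes from `Δ(P)` to `P`. -/
lemma C_mul_sub_X_mul_down {P : Sx k n} (h : coeff 0 P = 0) (i : Fin (n+1)) :
    C (f i) * P - X i * down f P ∈ KS f := by
  obtain ⟨A, rfl⟩ := exists_sum_X_mul h
  have h1 := Ideal.mul_mem_left _ (X i) (down_sum_X_mul (f := f) A)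
  have h2 : ∑ j, A j * (C (f i) * X j - C (f j) * X i) ∈ KS f :=
    Ideal.sum_mem _ fun j _ => Ideal.mul_mem_left _ _ (Koszul_mem_KS i j)
  have e : ∑ j, A j * (C (f i) * X j - C (f j) * X i) =
      C (f i) * ∑ j, X j * A j - X i * ∑ j, C (f j) * A j := by
    rw [Finset.mul_sum, Finset.mul_sum, ← Finset.sum_sub_distrib]
    exact Finset.sum_congr rfl fun j _ => by ring
  rw [e] at h2
  convert Ideal.sub_mem _ h2 h1 using 1
  ring

lemma down_J1 {P : Sx k n} (h : P ∈ J1 f) : down f P ∈ KS f := by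
  induction h using Submodule.span_induction with
  | mem P hP =>
    obtain ⟨a, ha, rfl⟩ := hP
    have h1 := down_sum_X_mul (f := f) fun i => C (a i)
    have e : ∑ i, C (f i) * C (a i) = (0 : Sx k n) := by
      rw [← C_0 (R := Rx k n), ← ha, map_sum]
      exact Finset.sum_congr rfl fun i _ => by rw [C_mul, mul_comm]
    rw [e, sub_zero] at h1
    convert h1 using 2
    exact Finset.sum_congr rfl fun i _ => mul_comm _ _
  | zero => rw [down_zero]; exact Ideal.zero_mem _
  | add P Q _ _ hP hQ => rw [down_add]; exact Ideal.add_mem _ hP hQ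
  | smul Q P hPm hP =>
    have := down_mul (f := f) Q (J1_coeff_zero hPm)
    exact (Submodule.sub_mem_iff_left _ (Ideal.mul_mem_left _ Q hP)).mp this

lemma down_Jset (hn : 2 ≤ n) {P : Sx k n} (h : P ∈ Jset f) : down f P ∈ Jset f := by
  rw [Jset_iff]
  intro i
  obtain ⟨N, hN⟩ := Jset_iff.mp h i
  refine ⟨N, ?_⟩
  have h1 := down_mul (f := f) (C (X i ^ N)) (Jset_coeff_zero hn h)
  exact KS_le_J1 ((Submodule.sub_mem_iff_right _ (down_J1 hN)).mp h1)

lemma totalDegree_down_le {P : Sx k n} {p : ℕ} (h : P.totalDegree ≤ p) :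
    (down f P).totalDegree ≤ p - 1 := by
  rw [down_eq]
  refine totalDegree_finsetSum_le fun α hα => ?_
  have h1 : α.degree ≤ p := (le_totalDegree hα).trans h
  unfold downTerm
  split_ifs with h0
  · simp
  · refine (totalDegree_monomial_le _ _).trans ?_
    have hmem := Finset.min'_mem _ (Finsupp.support_nonempty_iff.mpr h0)
    generalize α.support.min' (Finsupp.support_nonempty_iff.mpr h0) = i at hmem ⊢
    rw [Finsupp.mem_support_iff] at hmem
    have hle : Finsupp.single i 1 ≤ α := by
      rw [Finsupp.single_le_iff]; omega
    have h2 : α.degree = 1 + (α - Finsupp.single i 1).degree := by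
      conv_lhs => rw [← add_tsub_cancel_of_le hle]
      rw [map_add, Finsupp.degree_single]
    change (α - Finsupp.single i 1).degree ≤ p - 1
    omega

lemma XHomog_down {d μ : ℕ} (hf : ∀ i, (f i).IsHomogeneous d) {P : Sx k n} (h : XHomog μ P) :
    XHomog (μ + d) (down f P) := by
  intro b
  rw [down_eq, coeff_sum]
  refine IsHomogeneous.sum _ _ _ fun α _ => ?_
  unfold downTerm
  split_ifs with h0
  · rw [coeff_zero]; exact isHomogeneous_zero _ _ _
  · rw [coeff_monomial]
    split_ifs
    · exact (h α).mul (hf _)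
    · exact isHomogeneous_zero _ _ _

/-- `Δ` maps `J⟨p⟩` to `J⟨p-1⟩`. -/
lemma down_Jl (hn : 2 ≤ n) {p : ℕ} (hp : 2 ≤ p) {P : Sx k n} (h : P ∈ Jl f p) :
    down f P ∈ Jl f (p - 1) := by
  have hKS : KS f ≤ Jl f (p - 1) := KS_le_J1.trans (J1_le_Jl (by omega))
  induction h using Submodule.span_induction with
  | mem P hP => exact Ideal.subset_span ⟨down_Jset hn hP.1, totalDegree_down_le hP.2⟩
  | zero => rw [down_zero]; exact Ideal.zero_mem _
  | add P Q _ _ hP hQ => rw [down_add]; exact Ideal.add_mem _ hP hQ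
  | smul Q P hPm hP =>
    have := hKS (down_mul (f := f) Q (Jl_coeff_zero hn hPm))
    exact (Submodule.sub_mem_iff_left _ (Ideal.mul_mem_left _ Q hP)).mp this

/-- The kernel of `Δ` modulo `KS`: writing `P = ∑ T_i P_i`, the `P_i` can be corrected so that
`∑ f_i P_i = 0`, whence the `T`-coefficients of the `P_i` form syzygies. -/
lemma mem_J1_of_down_mem_KS {P : Sx k n} (h0 : coeff 0 P = 0) (h : down f P ∈ KS f) :
    P ∈ J1 f := by
  obtain ⟨A, rfl⟩ := exists_sum_X_mul h0
  have h1 : ∑ i, C (f i) * A i ∈ KS f :=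
    (Submodule.sub_mem_iff_right _ h).mp (down_sum_X_mul (f := f) A)
  -- a Koszul relation `f_i T_j - f_j T_i` is `∑ f_l g_l` with `∑ T_l g_l = T_i T_j - T_j T_i = 0`
  have key : ∀ κ ∈ KS f, ∃ g : Fin (n+1) → Sx k n, κ = ∑ i, C (f i) * g i ∧
      ∑ i, X i * g i = 0 := by
    intro κ hκ
    induction hκ using Submodule.span_induction with
    | mem κ hκ =>
      obtain ⟨i, j, hij, rfl⟩ := hκ
      refine ⟨Pi.single i (X j) - Pi.single j (X i), ?_, ?_⟩
      · simp [mul_sub, Finset.sum_sub_distrib, Pi.single_apply]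
      · simp [mul_sub, Finset.sum_sub_distrib, Pi.single_apply, mul_comm (X i)]
    | zero => exact ⟨0, by simp, by simp⟩
    | add x y _ _ hx hy =>
      obtain ⟨g, hg1, hg2⟩ := hx
      obtain ⟨g', hg1', hg2'⟩ := hy
      refine ⟨g + g', ?_, ?_⟩
      · simp [mul_add, Finset.sum_add_distrib, hg1, hg1']
      · simp [mul_add, Finset.sum_add_distrib, hg2, hg2']
    | smul Q x _ hx =>
      obtain ⟨g, hg1, hg2⟩ := hx
      refine ⟨fun i => Q * g i, ?_, ?_⟩
      · rw [hg1, smul_eq_mul, Finset.mul_sum]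
        exact Finset.sum_congr rfl fun i _ => by ring
      · rw [← mul_zero Q, ← hg2, Finset.mul_sum]
        exact Finset.sum_congr rfl fun i _ => by ring
  obtain ⟨g, hg1, hg2⟩ := key _ h1
  have e1 : ∑ i, X i * A i = ∑ i, X i * (A i - g i) := by
    simp [mul_sub, Finset.sum_sub_distrib, hg2]
  have e2 : ∑ i, C (f i) * (A i - g i) = 0 := by
    simp [mul_sub, Finset.sum_sub_distrib, hg1]
  rw [e1]
  -- collect terms by `T`-monomials; each resulting linear form comes from a syzygy by `e2`
  have e3 : ∑ i, X i * (A i - g i) = ∑ a ∈ Finset.univ.biUnion (fun i => (A i - g i).support),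
      monomial a 1 * ∑ i, C (coeff a (A i - g i)) * X i := by
    simp only [Finset.mul_sum]
    rw [Finset.sum_comm]
    refine Finset.sum_congr rfl fun i _ => ?_
    conv_lhs => rw [(A i - g i).as_sum, Finset.mul_sum]
    rw [Finset.sum_subset (Finset.subset_biUnion_of_mem (fun i => (A i - g i).support)
      (Finset.mem_univ i))]
    · refine Finset.sum_congr rfl fun a _ => ?_
      rw [← mul_assoc, mul_comm (monomial a 1), C_mul_monomial, mul_one, mul_comm]
    · intro a _ ha
      rw [notMem_support_iff.mp ha, map_zero, mul_zero]
  rw [e3]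
  refine Ideal.sum_mem _ fun a _ => Ideal.mul_mem_left _ _ (Ideal.subset_span ⟨_, ?_, rfl⟩)
  have e4 := congrArg (coeff a) e2
  rw [coeff_sum, coeff_zero] at e4
  rw [← e4]
  exact Finset.sum_congr rfl fun i _ => by rw [coeff_C_mul, mul_comm]

/-- A preimage under `Δ`, modulo `KS`, of an element of `J` all of whose coefficients lie in
`I`: if `P = ∑ f_i P_i`, take `∑ T_i P_i`. -/
lemma exists_lift {d μ : ℕ} (hf : ∀ i, (f i).IsHomogeneous d)
    (hprim : ∃ N : ℕ, (mIdeal k n) ^ N ≤ Ideal.span (Set.range f))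
    (hI : ∀ g : Rx k n, g.IsHomogeneous (μ + d) → g ∈ Ideal.span (Set.range f))
    {ℓ : ℕ} {P : Sx k n} (hP : P ∈ Jset f) (hdeg : P.totalDegree ≤ ℓ) (hX : XHomog (μ + d) P) :
    ∃ α ∈ Jset f, α.totalDegree ≤ ℓ + 1 ∧ XHomog μ α ∧ down f α - P ∈ KS f := by
  have hr : ∀ g : Rx k n, g.IsHomogeneous (μ + d) → ∃ r : Fin (n+1) → Rx k n,
      (∀ i, (r i).IsHomogeneous μ) ∧ g = ∑ i, f i * r i := by
    intro g hg
    obtain ⟨c, hc⟩ := Ideal.mem_span_range_iff_exists_fun.mp (hI g hg)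
    refine ⟨fun i => homogeneousComponent μ (c i),
      fun i => homogeneousComponent_isHomogeneous _ _, ?_⟩
    have h1 := congrArg (homogeneousComponent (μ + d)) hc
    rw [homogeneousComponent_eq_self hg, map_sum] at h1
    rw [← h1]
    refine Finset.sum_congr rfl fun i _ => ?_
    rw [mul_comm (c i), homogeneousComponent_homog_mul (hf i), if_pos (by omega),
      Nat.add_sub_cancel]
  choose r hr1 hr2 using fun a => hr (coeff a P) (hX a)
  let A : Fin (n+1) → Sx k n := fun i => ∑ a ∈ P.support, monomial a (r a i)
  have hA : P = ∑ i, C (f i) * A i := by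
    conv_lhs => rw [P.as_sum]
    simp only [A, Finset.mul_sum]
    rw [Finset.sum_comm]
    refine Finset.sum_congr rfl fun a _ => ?_
    conv_lhs => rw [hr2, map_sum]
    exact Finset.sum_congr rfl fun i _ => by rw [C_mul_monomial]
  have hdown := down_sum_X_mul (f := f) A
  rw [← hA] at hdown
  have h0 : coeff 0 (∑ i, X i * A i) = 0 := by
    have : constantCoeff (∑ i, X i * A i) = 0 := by simp
    exact this
  refine ⟨∑ i, X i * A i, ?_, ?_, ?_, hdown⟩
  · refine Jset_of_mul hprim fun i => ?_
    have h1 := C_mul_sub_X_mul_down (f := f) h0 i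
    have h2 := Ideal.add_mem _ h1 (Ideal.mul_mem_left _ (X i) hdown)
    have h3 := Jset_add (J1_subset_Jset (KS_le_J1 h2)) (Jset_mul (X i) hP)
    convert h3 using 1
    ring
  · refine totalDegree_finsetSum_le fun i _ => ?_
    refine (totalDegree_mul _ _).trans ?_
    rw [totalDegree_X, add_comm]
    gcongr
    refine totalDegree_finsetSum_le fun a ha => ?_
    exact (totalDegree_monomial_le _ _).trans ((le_totalDegree ha).trans hdeg)
  · intro b
    rw [coeff_sum]
    refine IsHomogeneous.sum _ _ _ fun i _ => ?_
    rw [coeff_X_mul']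
    split_ifs
    · simp only [A, coeff_sum, coeff_monomial]
      refine IsHomogeneous.sum _ _ _ fun a _ => ?_
      split_ifs
      · exact hr1 a i
      · exact isHomogeneous_zero _ _ _
    · exact isHomogeneous_zero _ _ _

/-- `Δ` maps `J⟨ℓ+1⟩_μ` onto `J⟨ℓ⟩_{μ+d}` modulo `KS`, provided that `R_{μ+d} ⊆ I`. -/
lemma down_surj (hn : 2 ≤ n) {d μ : ℕ} (hf : ∀ i, (f i).IsHomogeneous d)
    (hprim : ∃ N : ℕ, (mIdeal k n) ^ N ≤ Ideal.span (Set.range f))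
    (hI : ∀ g : Rx k n, g.IsHomogeneous (μ + d) → g ∈ Ideal.span (Set.range f))
    {ℓ : ℕ} {β : Sx k n} (hβ : β ∈ Jl f ℓ) (hX : XHomog (μ + d) β) :
    ∃ α ∈ Jl f (ℓ + 1), XHomog μ α ∧ down f α - β ∈ KS f := by
  have h := comp_Jl_mem_closure hf hβ (μ + d)
  rw [comp_of_XHomog hX, if_pos rfl] at h
  clear hX hβ
  induction h using AddSubmonoid.closure_induction with
  | mem Q hQ =>
    obtain ⟨a, P, h1, h2, h3, rfl⟩ := hQ
    obtain ⟨α, hα, hα2, hα3, hα4⟩ := exists_lift hf hprim hI h1 h2 h3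
    refine ⟨monomial a 1 * α, Ideal.mul_mem_left _ _ (Ideal.subset_span ⟨hα, hα2⟩), ?_, ?_⟩
    · have := XHomog.monomial_mul (isHomogeneous_one _ _) hα3 a
      rwa [zero_add] at this
    · have h4 := down_mul (f := f) (monomial a 1) (Jset_coeff_zero hn hα)
      convert Ideal.add_mem _ h4 (Ideal.mul_mem_left _ (monomial a 1) hα4) using 1
      ring
  | zero =>
    refine ⟨0, Ideal.zero_mem _, XHomog_zero μ, ?_⟩
    rw [down_zero, sub_zero]
    exact Ideal.zero_mem _
  | add x y _ _ hx hy =>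
    obtain ⟨a, ha1, ha2, ha3⟩ := hx
    obtain ⟨b, hb1, hb2, hb3⟩ := hy
    refine ⟨a + b, Ideal.add_mem _ ha1 hb1, ha2.add hb2, ?_⟩
    rw [down_add, add_sub_add_comm]
    exact Ideal.add_mem _ ha3 hb3

end Downgrading

/-- If `I` is `m`-primary and `p ≥ 2`: (i) `Δ` maps `X`-homogeneous elements of `J⟨p⟩`
into `J⟨p-1⟩`, so it induces `λ_p^μ : (J⟨p⟩/J⟨p-1⟩)_μ → (J⟨p-1⟩/(J⟨p-2⟩+KS))_{μ+d}`;
(ii) for every threshold integer `μ ≥ μ₀(I) = (n-1)(d-1) + d - indeg(H₁)`, the map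
`λ_p^μ` is an isomorphism (injective and surjective). -/
theorem downgrading_iso
    (k : Type*) [Field k] (n d : ℕ) (hn : 2 ≤ n) (hd : 1 ≤ d)
    (f : Fin (n+1) → Rx k n)
    (hfh : ∀ i, (f i).IsHomogeneous d)
    (hfl : LinearIndependent k f)
    (I : Ideal (Rx k n)) (hI : I = Ideal.span (Set.range f))
    (hprim : ∃ N : ℕ, (mIdeal k n) ^ N ≤ I)
    (p : ℕ) (hp : 2 ≤ p) :
    (∀ μ : ℕ, ∀ α ∈ Jl f p, XHomog μ α → down f α ∈ Jl f (p - 1)) ∧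
    (∀ μ : ℕ, ((n - 1) * (d - 1) + d : ℕ∞) ≤ (μ : ℕ∞) + indegE {ν | H1Nonzero f d ν} →
      (∀ α ∈ Jl f p, XHomog μ α → down f α ∈ Jl f (p - 2) + KS f → α ∈ Jl f (p - 1)) ∧
      (∀ β ∈ Jl f (p - 1), XHomog (μ + d) β →
        ∃ α ∈ Jl f p, XHomog μ α ∧ down f α - β ∈ Jl f (p - 2) + KS f)) := by
  subst hI
  refine ⟨fun μ α hα _ => down_Jl hn hp hα, fun μ hμ => ?_⟩
  have hI : ∀ g : Rx k n, g.IsHomogeneous (μ + d) → g ∈ Ideal.span (Set.range f) :=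
    fun g hg => mem_of_threshold f hn hd hfh hprim hμ hg
  have hp2 : p - 2 + 1 = p - 1 := by omega
  have hp1 : p - 1 + 1 = p := by omega
  refine ⟨?_, ?_⟩
  · intro α hα hX hΔ
    obtain ⟨η, hη, κ, hκ, hsum⟩ := Submodule.mem_sup.mp hΔ
    -- only the parts of `X`-degree `μ + d` of the two summands matter
    have hsum' : comp (μ + d) η + comp (μ + d) κ = down f α := by
      rw [← comp_add, hsum, comp_of_XHomog (XHomog_down hfh hX), if_pos rfl]
    -- lift the `J⟨p-2⟩` part of `Δ α`, so that `α - Γ` is in the kernel of `Δ` modulo `KS`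
    obtain ⟨Γ, hΓ, _, hΓ2⟩ := down_surj hn hfh hprim hI (comp_Jl hfh hη (μ + d))
      (XHomog_comp (μ + d) η)
    rw [hp2] at hΓ
    have h1 : down f (α - Γ) ∈ KS f := by
      rw [down_sub, ← hsum']
      convert Ideal.sub_mem _ (comp_KS hfh hκ (μ + d)) hΓ2 using 1
      ring
    have h2 : α - Γ ∈ J1 f := mem_J1_of_down_mem_KS
      (by rw [coeff_sub, Jl_coeff_zero hn hα, Jl_coeff_zero hn hΓ, sub_zero]) h1
    have h3 := Ideal.add_mem _ (J1_le_Jl (show 1 ≤ p - 1 by omega) h2) hΓ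
    rwa [sub_add_cancel] at h3
  · intro β hβ hX
    obtain ⟨α, hα, hα2, hα3⟩ := down_surj hn hfh hprim hI hβ hX
    rw [hp1] at hα
    exact ⟨α, hα, hα2, Submodule.mem_sup_right hα3⟩

end
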